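/- Let 1 < p < ∞, let k ≥ 1 be a natural number, let 0 < λ ≤ 1 and let γ ∈ ℝ. The discrete fractional integral operator I_{k,λ+iγ} is of weak type (1,p), i.e., there exists a constant C ≥ 0 such that ‖I_{k,λ+iγ} f‖_{ℓ^{p,∞}(ℤ)} ≤ C · ‖f‖_{ℓ¹(ℤ)} for every f ∈ ℓ¹(ℤ), if and only if λ ≥ 1/p. -/

import Mathlib

/-!
Write `s = 1 / p ∈ (0, 1)`. The operator is convolution with the kernel carrying the weight
`m ^ (-(λ + iγ))` at the point `m ^ k`; only the modulus `m ^ (-λ)` of the weights and the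
injectivity of `m ↦ m ^ k` matter.

Sufficiency (`weak_bound`): let `λ ≥ s` and let `E` be a finite subset of the level set `{|I f| > t}`,
with `N` elements. Then `t N ≤ ∑_{n ∈ E} |I f n| ≤ ∑_{n ∈ E} ∑_m |f (n - m ^ k)| m ^ (-s)`.
The terms with `m ≤ N`, summed over `n` first, contribute at most `‖f‖₁ ∑_{m ≤ N} m ^ (-s)`. In
the others the weight is at most `N ^ (-s)`, and summing over `m` first gives at most
`N · N ^ (-s) ‖f‖₁`. Both are `O(N ^ (1 - s) ‖f‖₁)` (`sum_weight_le`, `sum_fracInt_le`), so that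
`t N ^ s ≤ C ‖f‖₁`, uniformly in `E`.

Necessity (`necessity`): for `f = δ₀` one has `|I f (m ^ k)| = m ^ (-λ)`, so at the level
`N ^ (-λ) / 2` the level set has at least `N` points; hence `N ^ (s - λ) ≤ 2 C` for all `N ≥ 1`, which
forces `s ≤ λ`.
-/

open MeasureTheory ENNReal NNReal

/-- The weak `ℓ^{p,∞}` (quasi-)norm of a function on a discrete space:
`sup_{α>0} α · (card {m : |f m| > α})^{1/p}`, where `card` is the counting measure. -/
noncomputable def weakNorm {α : Type*} [MeasurableSpace α] {E : Type*} [NormedAddCommGroup E]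
    (f : α → E) (p : ℝ) : ℝ≥0∞ :=
  ⨆ t : ℝ≥0, (t : ℝ≥0∞) * (Measure.count {m | (t : ℝ) < ‖f m‖}) ^ (1 / p)

/-- The `ℓ¹` norm of `f`. -/
noncomputable def l1Norm {α : Type*} {E : Type*} [NormedAddCommGroup E] (f : α → E) : ℝ≥0∞ :=
  ∑' m, (‖f m‖₊ : ℝ≥0∞)

/-- The discrete fractional integral operator
`I_{k,λ+iγ} f (n) = Σ_{m=1}^∞ f (n - m^k) / m^{λ+iγ}`. -/
noncomputable def fracInt (k : ℕ) (lam γ : ℝ) (f : ℤ → ℂ) : ℤ → ℂ :=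
  fun n => ∑' m : ℕ+, f (n - (m : ℤ) ^ k) / ((m : ℕ) : ℂ) ^ ((lam : ℂ) + γ * Complex.I)

/-- Partial sums of `m ^ (-s)`, compared with the integral of `x ^ (-s)`. -/
lemma sum_weight_le (s : ℝ) (hs0 : 0 < s) (hs1 : s < 1) (N : ℕ) :
    ∑ m ∈ Finset.range N, ((m : ℝ) + 1) ^ (-s) ≤ (1 - s)⁻¹ * (N : ℝ) ^ (1 - s) := by
  have h1 : 0 < 1 - s := by linarith
  induction N with
  | zero => simp [Real.zero_rpow h1.ne']
  | succ n ih =>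
    rw [Finset.sum_range_succ]
    have hn : (0 : ℝ) < n + 1 := by positivity
    -- Bernoulli's inequality for `(1 - 1 / (n + 1)) ^ (1 - s) = (n / (n + 1)) ^ (1 - s)`.
    have hb := rpow_one_add_le_one_add_mul_self (s := -(1 / ((n : ℝ) + 1)))
      (by
        have : 1 / ((n : ℝ) + 1) ≤ 1 := by
          rw [div_le_one hn]; linarith [(Nat.cast_nonneg n : (0 : ℝ) ≤ n)]
        linarith)
      h1.le (by linarith : 1 - s ≤ 1)
    have he : 1 + -(1 / ((n : ℝ) + 1)) = n / (n + 1) := by field_simp; ring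
    rw [he, Real.div_rpow (by positivity) hn.le, div_le_iff₀ (by positivity)] at hb
    have hsp : ((n : ℝ) + 1) ^ (-s) = ((n : ℝ) + 1) ^ (1 - s) / (n + 1) := by
      rw [← Real.rpow_sub_one hn.ne']; congr 1; ring
    push_cast
    rw [hsp]
    calc _ ≤ (1 - s)⁻¹ * (n : ℝ) ^ (1 - s) + ((n : ℝ) + 1) ^ (1 - s) / (n + 1) := by gcongr
      _ ≤ (1 - s)⁻¹ * ((1 + (1 - s) * -(1 / ((n : ℝ) + 1))) * ((n : ℝ) + 1) ^ (1 - s))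
          + ((n : ℝ) + 1) ^ (1 - s) / (n + 1) := by gcongr
      _ = _ := by field_simp; ring

lemma norm_weight (lam γ : ℝ) (m : ℕ+) :
    ‖((m : ℕ) : ℂ) ^ ((lam : ℂ) + γ * Complex.I)‖ = ((m : ℕ) : ℝ) ^ lam := by
  rw [Complex.norm_natCast_cpow_of_pos m.pos]; simp

/-- No summability is needed: the `tsum` defining `fracInt` is `0` if it diverges. -/
lemma enorm_fracInt_le (s : ℝ) (k : ℕ) (lam γ : ℝ) (hs : s ≤ lam) (f : ℤ → ℂ) (n : ℤ) :
    ‖fracInt k lam γ f n‖ₑ ≤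
      ∑' m : ℕ+, ‖f (n - (m : ℤ) ^ k)‖ₑ * ENNReal.ofReal (((m : ℕ) : ℝ) ^ (-s)) := by
  unfold fracInt
  refine (enorm_tsum_le_tsum_enorm).trans (ENNReal.tsum_le_tsum fun m => ?_)
  rw [← ofReal_norm, ← ofReal_norm, norm_div, norm_weight,
    ← ENNReal.ofReal_mul (norm_nonneg _), div_eq_mul_inv, ← Real.rpow_neg (by positivity)]
  have : (1 : ℝ) ≤ ((m : ℕ) : ℝ) := by exact_mod_cast (one_le : 1 ≤ m)
  gcongr

/-- The bound for `I f` summed over a finite set, which is weak type `(1, 1 / s)` in dual form. -/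
lemma sum_fracInt_le (s : ℝ) (hs0 : 0 < s) (hs1 : s < 1) (k : ℕ) (hk : 1 ≤ k) (lam γ : ℝ)
    (hs : s ≤ lam) (f : ℤ → ℂ) (E : Finset ℤ) (hE : 0 < E.card) :
    ∑ n ∈ E, ‖fracInt k lam γ f n‖ₑ ≤
      ENNReal.ofReal (((1 - s)⁻¹ + 1) * (E.card : ℝ) ^ (1 - s)) * l1Norm f := by
  set N := E.card with hN
  have hN0 : (0 : ℝ) < N := by exact_mod_cast hE
  let w : ℕ+ → ℝ≥0∞ := fun m => ENNReal.ofReal (((m : ℕ) : ℝ) ^ (-s))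
  -- The weights truncated at `m ≤ N`: the cut-off `N = #E` balances the two bounds.
  let w' : ℕ+ → ℝ≥0∞ := fun m => if (m : ℕ) ≤ N then w m else 0
  have hw : ∀ m, w m ≤ w' m + ENNReal.ofReal ((N : ℝ) ^ (-s)) := by
    intro m
    by_cases h : (m : ℕ) ≤ N
    · simp [w', h]
    · simp only [w', h, if_false, zero_add, w]
      apply ENNReal.ofReal_le_ofReal
      apply Real.rpow_le_rpow_of_nonpos hN0 _ (by linarith)
      exact_mod_cast (not_le.mp h).le
  have hA : l1Norm f = ∑' j : ℤ, ‖f j‖ₑ := rfl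
  have hinj : ∀ n : ℤ, Function.Injective (fun m : ℕ+ => n - (m : ℤ) ^ k) := by
    intro n a b h
    have h' : ((a : ℕ) : ℤ) ^ k = ((b : ℕ) : ℤ) ^ k := by simpa using h
    have h2 : (a : ℕ) ^ k = (b : ℕ) ^ k := by exact_mod_cast h'
    exact PNat.coe_injective (Nat.pow_left_injective (by omega) h2)
  have hsumw : ∑' m, w' m ≤ ENNReal.ofReal ((1 - s)⁻¹ * (N : ℝ) ^ (1 - s)) := by
    rw [← Equiv.pnatEquivNat.symm.tsum_eq, tsum_eq_sum (s := Finset.range N)]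
    · refine le_trans ?_ (ENNReal.ofReal_le_ofReal (sum_weight_le s hs0 hs1 N))
      rw [ENNReal.ofReal_sum_of_nonneg (fun i _ => by positivity)]
      refine Finset.sum_le_sum fun i _ => ?_
      simp only [w', w]
      split_ifs <;> simp
    · intro b hb
      simp only [Finset.mem_range, not_lt] at hb
      have : ¬ (((Equiv.pnatEquivNat.symm b : ℕ+) : ℕ) ≤ N) := by
        simp; omega
      simp only [w', this, if_false]
  calc ∑ n ∈ E, ‖fracInt k lam γ f n‖ₑ
      ≤ ∑ n ∈ E, ∑' m : ℕ+, ‖f (n - (m : ℤ) ^ k)‖ₑ * w m :=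
        Finset.sum_le_sum fun n _ => enorm_fracInt_le s k lam γ hs f n
    _ ≤ ∑ n ∈ E, ((∑' m : ℕ+, ‖f (n - (m : ℤ) ^ k)‖ₑ * w' m) +
          (∑' m : ℕ+, ‖f (n - (m : ℤ) ^ k)‖ₑ) * ENNReal.ofReal ((N : ℝ) ^ (-s))) := by
        refine Finset.sum_le_sum fun n _ => ?_
        rw [← ENNReal.tsum_mul_right, ← ENNReal.tsum_add]
        refine ENNReal.tsum_le_tsum fun m => ?_
        rw [← mul_add]
        gcongr
        exact hw m
    _ = (∑' m : ℕ+, ∑ n ∈ E, ‖f (n - (m : ℤ) ^ k)‖ₑ * w' m) +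
          ∑ n ∈ E, (∑' m : ℕ+, ‖f (n - (m : ℤ) ^ k)‖ₑ) * ENNReal.ofReal ((N : ℝ) ^ (-s)) := by
        rw [Finset.sum_add_distrib, Summable.tsum_finsetSum (fun _ _ => ENNReal.summable)]
    _ ≤ (∑' m : ℕ+, l1Norm f * w' m) +
          ∑ n ∈ E, l1Norm f * ENNReal.ofReal ((N : ℝ) ^ (-s)) := by
        gcongr with m n hn
        · rw [← Finset.sum_mul]
          gcongr
          rw [hA, ← (Equiv.subRight ((m : ℤ) ^ k)).tsum_eq]
          exact ENNReal.sum_le_tsum E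
        · exact ENNReal.tsum_comp_le_tsum_of_injective (hinj n) (fun j => ‖f j‖ₑ)
    _ ≤ l1Norm f * ENNReal.ofReal ((1 - s)⁻¹ * (N : ℝ) ^ (1 - s)) +
          l1Norm f * ENNReal.ofReal ((N : ℝ) ^ (1 - s)) := by
        rw [ENNReal.tsum_mul_left, Finset.sum_const, nsmul_eq_mul, ← hN]
        refine add_le_add (by gcongr) ?_
        have : (N : ℝ) ^ (1 - s) = N * (N : ℝ) ^ (-s) := by
          rw [sub_eq_add_neg, Real.rpow_add hN0, Real.rpow_one]
        rw [this, ENNReal.ofReal_mul hN0.le, ENNReal.ofReal_natCast]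
        exact (mul_left_comm _ _ _).le
    _ = _ := by
        have h1 : 0 < 1 - s := by linarith
        rw [← mul_add, ← ENNReal.ofReal_add (by positivity) (by positivity), mul_comm]
        congr 2; ring

lemma weak_bound (p : ℝ) (hp : 1 < p) (k : ℕ) (hk : 1 ≤ k) (lam γ : ℝ) (hlam : 1 / p ≤ lam)
    (f : ℤ → ℂ) (hf : Summable (fun m => ‖f m‖)) :
    weakNorm (fracInt k lam γ f) p ≤ ENNReal.ofReal ((1 - 1 / p)⁻¹ + 1) * l1Norm f := by
  have hp0 : 0 < p := by linarith
  have hs0 : 0 < 1 / p := by positivity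
  have hs1 : 1 / p < 1 := by rw [div_lt_one hp0]; exact hp
  have hC : 0 ≤ (1 - 1 / p)⁻¹ + 1 := by
    have : 0 < 1 - 1 / p := by linarith
    positivity
  set s := 1 / p with hs
  have hA : l1Norm f ≠ ⊤ := by
    unfold l1Norm
    exact ENNReal.tsum_coe_ne_top_iff_summable.mpr ((NNReal.summable_coe.mp hf))
  unfold weakNorm
  refine iSup_le fun t => ?_
  rcases eq_or_ne t 0 with rfl | ht
  · simp
  set S := {m | (t : ℝ) < ‖fracInt k lam γ f m‖} with hS
  set B := ENNReal.ofReal ((1 - s)⁻¹ + 1) * l1Norm f with hB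
  have hBt : B ≠ ⊤ := ENNReal.mul_ne_top ENNReal.ofReal_ne_top hA
  have key : ∀ E : Finset ℤ, (E : Set ℤ) ⊆ S → (t : ℝ≥0∞) * (E.card : ℝ≥0∞) ^ s ≤ B := by
    intro E hES
    rcases Nat.eq_zero_or_pos E.card with h0 | h0
    · simp [h0, ENNReal.zero_rpow_of_pos hs0]
    have hN : (0 : ℝ) < E.card := by exact_mod_cast h0
    have h1 : (t : ℝ≥0∞) * E.card ≤ ∑ n ∈ E, ‖fracInt k lam γ f n‖ₑ := by
      rw [mul_comm, ← nsmul_eq_mul]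
      refine Finset.card_nsmul_le_sum _ _ _ fun n hn => ?_
      have : (t : ℝ) < ‖fracInt k lam γ f n‖ := hES hn
      rw [enorm_eq_nnnorm, ENNReal.coe_le_coe]
      exact_mod_cast this.le
    have h2 := h1.trans (sum_fracInt_le s hs0 hs1 k hk lam γ hlam f E h0)
    have h3 : (E.card : ℝ≥0∞) = (E.card : ℝ≥0∞) ^ s * (E.card : ℝ≥0∞) ^ (1 - s) := by
      rw [← ENNReal.rpow_add _ _ (by exact_mod_cast h0.ne') (ENNReal.natCast_ne_top _)]
      simp
    have h4 : ENNReal.ofReal ((E.card : ℝ) ^ (1 - s)) = (E.card : ℝ≥0∞) ^ (1 - s) := by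
      rw [← ENNReal.ofReal_rpow_of_pos hN, ENNReal.ofReal_natCast]
    rw [ENNReal.ofReal_mul hC, h4, mul_right_comm] at h2
    nth_rewrite 1 [h3] at h2
    rw [← mul_assoc] at h2
    refine (ENNReal.mul_le_mul_iff_left ?_ ?_).mp h2
    · exact (ENNReal.rpow_pos (by exact_mod_cast h0) (ENNReal.natCast_ne_top _)).ne'
    · exact ENNReal.rpow_ne_top_of_nonneg (by linarith) (ENNReal.natCast_ne_top _)
  rcases S.finite_or_infinite with hfin | hinf
  · rw [Measure.count_apply_finite S hfin]
    exact key _ (by simp)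
  · -- An infinite level set would have finite subsets of arbitrarily large cardinality.
    exfalso
    have ht0 : (t : ℝ≥0∞) ≠ 0 := by exact_mod_cast ht
    have hfin : (B / t) ^ p ≠ ⊤ :=
      ENNReal.rpow_ne_top_of_nonneg hp0.le (ENNReal.div_ne_top hBt ht0)
    obtain ⟨N, hN⟩ := ENNReal.exists_nat_gt hfin
    obtain ⟨E, hES, hEN⟩ := hinf.exists_subset_card_eq N
    have h1 := key E hES
    rw [hEN, mul_comm, ← ENNReal.le_div_iff_mul_le (Or.inl ht0) (Or.inl ENNReal.coe_ne_top)] at h1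
    have h2 := ENNReal.rpow_le_rpow h1 hp0.le
    rw [← ENNReal.rpow_mul, hs, one_div, inv_mul_cancel₀ hp0.ne', ENNReal.rpow_one] at h2
    exact absurd hN (not_lt.mpr h2)

lemma fracInt_single (k : ℕ) (hk : 1 ≤ k) (lam γ : ℝ) (m : ℕ+) :
    ‖fracInt k lam γ (Pi.single 0 1) ((m : ℤ) ^ k)‖ = ((m : ℕ) : ℝ) ^ (-lam) := by
  unfold fracInt
  rw [tsum_eq_single m]
  · rw [sub_self, Pi.single_eq_same, norm_div, norm_weight, norm_one, Real.rpow_neg (by positivity),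
      one_div]
  · intro b hb
    have : (m : ℤ) ^ k - (b : ℤ) ^ k ≠ 0 := by
      intro h
      have h' : ((m : ℕ) : ℤ) ^ k = ((b : ℕ) : ℤ) ^ k := by simpa [sub_eq_zero] using h
      have h2 : (m : ℕ) ^ k = (b : ℕ) ^ k := by exact_mod_cast h'
      exact hb (PNat.coe_injective (Nat.pow_left_injective (by omega) h2)).symm
    rw [Pi.single_eq_of_ne this, zero_div]

lemma necessity (p : ℝ) (hp : 1 < p) (k : ℕ) (hk : 1 ≤ k) (lam : ℝ) (hlam0 : 0 < lam) (γ : ℝ)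
    (C : ℝ) (hC : 0 ≤ C) (h : weakNorm (fracInt k lam γ (Pi.single 0 1)) p ≤
      ENNReal.ofReal C * l1Norm (Pi.single 0 1 : ℤ → ℂ)) : 1 / p ≤ lam := by
  have hp0 : 0 < p := by linarith
  have hl1 : l1Norm (Pi.single 0 1 : ℤ → ℂ) = 1 := by
    unfold l1Norm
    rw [tsum_eq_single 0 (fun b hb => by simp [Pi.single_eq_of_ne hb])]
    simp
  rw [hl1, mul_one] at h
  have key : ∀ N : ℕ, 1 ≤ N → (N : ℝ) ^ (1 / p - lam) ≤ 2 * C := by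
    intro N hN
    have hN0 : (0 : ℝ) < N := by exact_mod_cast hN
    have hpos : 0 < (N : ℝ) ^ (-lam) := by positivity
    let t : ℝ≥0 := ⟨(N : ℝ) ^ (-lam) / 2, by positivity⟩
    have h1 := (le_iSup (fun t : ℝ≥0 => (t : ℝ≥0∞) * (Measure.count
      {m | (t : ℝ) < ‖fracInt k lam γ (Pi.single 0 1) m‖}) ^ (1 / p)) t).trans h
    have h2 : (N : ℝ≥0∞) ≤ Measure.count
        {m | (t : ℝ) < ‖fracInt k lam γ (Pi.single 0 1) m‖} := by
      let E : Finset ℤ := (Finset.Icc 1 N).image (fun m : ℕ => (m : ℤ) ^ k)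
      have hcard : E.card = N := by
        rw [Finset.card_image_of_injective, Nat.card_Icc, Nat.add_sub_cancel]
        intro a b hab
        have hab' : (a : ℤ) ^ k = (b : ℤ) ^ k := hab
        have h2 : a ^ k = b ^ k := by exact_mod_cast hab'
        exact Nat.pow_left_injective (by omega) h2
      rw [← hcard, ← Measure.count_apply_finset]
      refine measure_mono fun x hx => ?_
      obtain ⟨m, hm, rfl⟩ := Finset.mem_image.mp (Finset.mem_coe.mp hx)
      rw [Finset.mem_Icc] at hm
      have h3 := fracInt_single k hk lam γ ⟨m, hm.1⟩
      have hm0 : (0 : ℝ) < m := by exact_mod_cast hm.1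
      have h4 : (N : ℝ) ^ (-lam) ≤ (m : ℝ) ^ (-lam) :=
        Real.rpow_le_rpow_of_nonpos hm0 (by exact_mod_cast hm.2) (by linarith)
      change (N : ℝ) ^ (-lam) / 2 < ‖_‖
      simp only [PNat.mk_coe] at h3
      rw [h3]
      linarith
    have h3 : (t : ℝ≥0∞) * (N : ℝ≥0∞) ^ (1 / p) ≤ ENNReal.ofReal C := by
      refine le_trans ?_ h1
      gcongr
    have h4 : (t : ℝ≥0∞) = ENNReal.ofReal ((N : ℝ) ^ (-lam) / 2) :=
      (ENNReal.ofReal_eq_coe_nnreal _).symm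
    rw [h4, ← ENNReal.ofReal_natCast, ENNReal.ofReal_rpow_of_pos hN0,
      ← ENNReal.ofReal_mul (by positivity), ENNReal.ofReal_le_ofReal_iff hC] at h3
    rw [sub_eq_add_neg, Real.rpow_add hN0]
    linarith
  by_contra! hlt
  have ht := (_root_.tendsto_rpow_atTop (sub_pos.mpr hlt)).comp tendsto_natCast_atTop_atTop
  obtain ⟨N, hN1, hN2⟩ :=
    ((ht.eventually_gt_atTop (2 * C)).and (Filter.eventually_ge_atTop 1)).exists
  exact absurd (key N hN2) (not_le.mpr hN1)

/-- For `1 < p < ∞`, `k ≥ 1`, `0 < λ ≤ 1`, `γ ∈ ℝ`, the discrete fractional integral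
operator `I_{k,λ+iγ}` is of weak type `(1,p)` if and only if `λ ≥ 1/p`. -/
theorem fracInt_weak_type_iff (p : ℝ) (hp : 1 < p) (k : ℕ) (hk : 1 ≤ k)
    (lam : ℝ) (hlam0 : 0 < lam) (hlam1 : lam ≤ 1) (γ : ℝ) :
    (∃ C : ℝ, 0 ≤ C ∧ ∀ f : ℤ → ℂ, Summable (fun m => ‖f m‖) →
      weakNorm (fracInt k lam γ f) p ≤ ENNReal.ofReal C * l1Norm f) ↔ 1 / p ≤ lam := by
  constructor
  · rintro ⟨C, hC, h⟩
    refine necessity p hp k hk lam hlam0 γ C hC (h _ ?_)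
    refine summable_of_ne_finset_zero (s := {0}) fun b hb => ?_
    rw [Pi.single_eq_of_ne (by simpa using hb), norm_zero]
  · intro hlam
    have h1 : 0 < 1 - 1 / p := by
      rw [sub_pos, div_lt_one (by linarith)]; exact hp
    exact ⟨(1 - 1 / p)⁻¹ + 1, by positivity, fun f hf => weak_bound p hp k hk lam γ hlam f hf⟩
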